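/- Baker–Pixley Theorem. Let A be a finite set, let F be a set of operations on A, let C be the clone generated by F, and suppose C contains a (d+1)-ary near unanimity operation for some d ≥ 2. Then an operation f on A belongs to C if and only if f preserves every d-ary relation ρ ⊆ A^d that is preserved by every operation in F (equivalently, every subalgebra of the d-th power of the algebra (A;F) is closed under f). -/

import Mathlib

universe u

/-- The type of finitary operations (of positive arity `n + 1`) on `A`. -/
abbrev Ops (A : Type u) : Type u := Σ n : ℕ, (Fin (n + 1) → A) → A

/-- A set of finitary operations on `A` is a clone if it contains all projection
operations and is closed under composition. -/
def IsClone {A : Type u} (C : Set (Ops A)) : Prop :=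
  (∀ (n : ℕ) (i : Fin (n + 1)), (⟨n, fun x => x i⟩ : Ops A) ∈ C) ∧
  ∀ (n m : ℕ) (f : (Fin (n + 1) → A) → A) (g : Fin (n + 1) → (Fin (m + 1) → A) → A),
    (⟨n, f⟩ : Ops A) ∈ C → (∀ i, (⟨m, g i⟩ : Ops A) ∈ C) →
    (⟨m, fun x => f fun i => g i x⟩ : Ops A) ∈ C

/-- The clone generated by a set `F` of operations: the least clone containing `F`. -/
def cloneGen {A : Type u} (F : Set (Ops A)) : Set (Ops A) :=
  ⋂₀ {C : Set (Ops A) | IsClone C ∧ F ⊆ C}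

/-- The clone of all projection operations on `A`. -/
def projClone (A : Type u) : Set (Ops A) :=
  {f : Ops A | ∃ i : Fin (f.1 + 1), f.2 = fun x => x i}

/-- A clone `M` is maximal if it is a proper subclone of the clone of all operations
and the clone of all operations is the only clone properly containing it. -/
def IsMaximalClone {A : Type u} (M : Set (Ops A)) : Prop :=
  IsClone M ∧ M ≠ Set.univ ∧
    ∀ D : Set (Ops A), IsClone D → M ⊆ D → D = M ∨ D = Set.univ

/-- A clone `C` is minimal if the clone of projections is its unique proper subclone. -/
def IsMinimalClone {A : Type u} (C : Set (Ops A)) : Prop :=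
  IsClone C ∧ C ≠ projClone A ∧
    ∀ D : Set (Ops A), IsClone D → D ⊆ C → D = projClone A ∨ D = C

/-- An `n`-ary operation `f` preserves a `k`-ary relation `ρ` if applying `f`
coordinatewise to tuples from `ρ` always yields a tuple in `ρ`. -/
def Preserves {A : Type u} {n k : ℕ} (f : (Fin n → A) → A) (ρ : Set (Fin k → A)) : Prop :=
  ∀ t : Fin n → Fin k → A, (∀ i, t i ∈ ρ) → (fun j => f fun i => t i j) ∈ ρ

/-- `Pol ρ` is the clone of all operations preserving the relation `ρ`. -/
def Pol {A : Type u} {k : ℕ} (ρ : Set (Fin k → A)) : Set (Ops A) :=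
  {f : Ops A | Preserves f.2 ρ}

theorem isClone_cloneGen {A : Type u} (F : Set (Ops A)) : IsClone (cloneGen F) := by
  refine ⟨fun n i C hC => hC.1.1 n i, fun n m f g hf hg C hC => ?_⟩
  exact hC.1.2 n m f g (hf C hC) fun i => hg i C hC

theorem subset_cloneGen {A : Type u} (F : Set (Ops A)) : F ⊆ cloneGen F :=
  fun _ hf _ hC => hC.2 hf

theorem isClone_pol {A : Type u} {k : ℕ} (ρ : Set (Fin k → A)) : IsClone (Pol ρ) := by
  refine ⟨fun n i t ht => ht i, fun n m f g hf hg t ht => ?_⟩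
  exact hf (fun i j => g i fun l => t l j) fun i => hg i t ht

/-- The tuples of values taken at given points by the `(n + 1)`-ary members of a clone form an
invariant relation of the clone. -/
theorem IsClone.preserves_values {A : Type u} {C : Set (Ops A)} (hC : IsClone C) {n k : ℕ}
    (p : Fin k → Fin (n + 1) → A) {g : Ops A} (hg : g ∈ C) :
    Preserves g.2 {t | ∃ h : (Fin (n + 1) → A) → A, (⟨n, h⟩ : Ops A) ∈ C ∧
      t = fun j => h (p j)} := by
  intro t ht
  choose h hh ht using ht
  refine ⟨fun x => g.2 fun i => h i x, hC.2 g.1 n g.2 h hg hh, ?_⟩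
  simp [ht]

/-- An operation preserving all `d`-ary relations invariant under a clone is interpolated by
members of the clone at any `d` points. -/
theorem IsClone.exists_interpolation {A : Type u} {C : Set (Ops A)} (hC : IsClone C) {n d : ℕ}
    {f : (Fin (n + 1) → A) → A}
    (hf : ∀ ρ : Set (Fin d → A), (∀ g ∈ C, Preserves g.2 ρ) → Preserves f ρ)
    (p : Fin d → Fin (n + 1) → A) :
    ∃ h : (Fin (n + 1) → A) → A, (⟨n, h⟩ : Ops A) ∈ C ∧ ∀ j, h (p j) = f (p j) := by
  obtain ⟨h, hh, e⟩ := hf _ (fun g hg => hC.preserves_values p hg) (fun i j => p j i)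
    fun i => ⟨fun x => x i, hC.1 n i, rfl⟩
  exact ⟨h, hh, fun j => (congrFun e j).symm⟩

/-- In a clone with a `(d + 1)`-ary near unanimity operation, interpolation at any `d` points
implies interpolation on any finite set. -/
theorem IsClone.exists_interpolation_finset {A : Type u} {C : Set (Ops A)} (hC : IsClone C)
    {n d : ℕ} {u : (Fin (d + 1) → A) → A} (hu : (⟨d, u⟩ : Ops A) ∈ C)
    (hnu : ∀ (x y : A) (i : Fin (d + 1)), u (Function.update (fun _ => x) i y) = x)
    {f : (Fin (n + 1) → A) → A}
    (hf : ∀ p : Fin d → Fin (n + 1) → A,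
      ∃ h : (Fin (n + 1) → A) → A, (⟨n, h⟩ : Ops A) ∈ C ∧ ∀ j, h (p j) = f (p j))
    (S : Finset (Fin (n + 1) → A)) :
    ∃ h : (Fin (n + 1) → A) → A, (⟨n, h⟩ : Ops A) ∈ C ∧ ∀ x ∈ S, h x = f x := by
  classical
  induction S using Finset.strongInduction with
  | H S ih =>
    rcases S.eq_empty_or_nonempty with rfl | hS
    · exact ⟨fun x => x 0, hC.1 n 0, by simp⟩
    rcases le_or_gt S.card d with hcard | hcard
    · have : Nonempty S := hS.to_subtype
      obtain ⟨e⟩ : Nonempty (S ↪ Fin d) :=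
        Function.Embedding.nonempty_of_card_le (by simpa using hcard)
      obtain ⟨h, hh, hp⟩ := hf fun j => (Function.invFun e j : S)
      refine ⟨h, hh, fun x hx => ?_⟩
      simpa [Function.leftInverse_invFun e.injective ⟨x, hx⟩] using hp (e ⟨x, hx⟩)
    · obtain ⟨s⟩ : Nonempty (Fin (d + 1) ↪ S) :=
        Function.Embedding.nonempty_of_card_le (by simpa using hcard)
      choose h hh hs using fun i => ih (S.erase (s i)) (Finset.erase_ssubset (s i).2)
      refine ⟨fun x => u fun i => h i x, hC.2 d n u h hu hh, fun x hx => ?_⟩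
      have agree : ∀ i, (s i : Fin (n + 1) → A) ≠ x → h i x = f x := fun i hi =>
        hs i x (Finset.mem_erase.2 ⟨hi.symm, hx⟩)
      obtain ⟨i, hi⟩ : ∃ i, ∀ j, j ≠ i → (s j : Fin (n + 1) → A) ≠ x := by
        by_cases hex : ∃ i, (s i : Fin (n + 1) → A) = x
        · obtain ⟨i, rfl⟩ := hex
          exact ⟨i, fun j hj e => hj (s.injective (Subtype.ext e))⟩
        · exact ⟨0, fun j _ e => hex ⟨j, e⟩⟩
      have key : (fun j => h j x) = Function.update (fun _ => f x) i (h i x) :=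
        Function.eq_update_iff.2 ⟨rfl, fun j hj => agree j (hi j hj)⟩
      exact (congrArg u key).trans (hnu _ _ i)

/-- **Baker–Pixley Theorem.**  Let `A` be a finite set, `F` a set of operations on `A`,
and suppose the clone generated by `F` contains a `(d+1)`-ary near unanimity operation
(`d ≥ 2`).  Then an operation `f` belongs to the clone generated by `F` if and only if
`f` preserves every `d`-ary relation on `A` preserved by all operations in `F`. -/
theorem baker_pixley {A : Type u} [Fintype A] (F : Set (Ops A)) (d : ℕ) (hd : 2 ≤ d)
    (u : (Fin (d + 1) → A) → A) (hu : (⟨d, u⟩ : Ops A) ∈ cloneGen F)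
    (hnu : ∀ (x y : A) (i : Fin (d + 1)), u (Function.update (fun _ => x) i y) = x) :
    ∀ f : Ops A, f ∈ cloneGen F ↔
      ∀ ρ : Set (Fin d → A), (∀ g ∈ F, Preserves g.2 ρ) → Preserves f.2 ρ := by
  intro f
  have hC := isClone_cloneGen F
  refine ⟨fun hf ρ hρ => hf (Pol ρ) ⟨isClone_pol ρ, hρ⟩, fun hf => ?_⟩
  obtain ⟨n, f⟩ := f
  obtain ⟨h, hh, e⟩ := hC.exists_interpolation_finset hu hnu
    (hC.exists_interpolation fun ρ hρ => hf ρ fun g hg => hρ g (subset_cloneGen F hg))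
    Finset.univ
  have hfe : h = f := funext fun x => e x (Finset.mem_univ x)
  exact hfe ▸ hh
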